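/- arXiv:2602.23326 — 2 statements merged into one kernel-verified Lean document; each statement's English description precedes it below -/
import Mathlib

section
/- Let, for each n ≥ 1, A_n ~ GOE(n), and let H_n(σ) = (1/2)⟨σ, A_n σ⟩ for σ ∈ {−1,1}^n. Then for every β > 0, the limit lim_{n→∞} (1/n) E[ log Σ_{σ ∈ {−1,1}^n} exp(β H_n(σ)) ] exists and is finite; consequently the limit lim_{n→∞} (1/n) E[ max_{σ ∈ {−1,1}^n} H_n(σ) ] also exists and is finite. -/
open MeasureTheory ProbabilityTheory Filter
open scoped NNReal ENNReal

noncomputable section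

/-- A random symmetric matrix `A : Ω → (Fin n → Fin n → ℝ)` has the `GOE(n)` distribution:
entries are measurable, the matrix is symmetric, the upper-triangular entries (including the
diagonal) are independent, diagonal entries are `N(0, 2/n)` and off-diagonal entries are
`N(0, 1/n)`. -/
def IsGOE {Ω : Type*} [MeasurableSpace Ω] (μ : Measure Ω) (n : ℕ)
    (A : Ω → Fin n → Fin n → ℝ) : Prop :=
  (∀ i j, Measurable fun ω => A ω i j) ∧
  (∀ ω, ∀ i j, A ω i j = A ω j i) ∧
  iIndepFun
    (fun (p : {p : Fin n × Fin n // p.1 ≤ p.2}) => fun ω => A ω p.1.1 p.1.2) μ ∧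
  (∀ i : Fin n, μ.map (fun ω => A ω i i) = gaussianReal 0 (2 / (n : ℝ≥0))) ∧
  (∀ i j : Fin n, i < j → μ.map (fun ω => A ω i j) = gaussianReal 0 (1 / (n : ℝ≥0)))

/-- The point of the hypercube `{-1,1}^n` indexed by a Boolean vector. -/
def signVec {n : ℕ} (b : Fin n → Bool) : Fin n → ℝ := fun i => if b i then 1 else -1


section gauss
variable {ι κ : Type*} [Fintype ι] [DecidableEq ι] [Fintype κ] [DecidableEq κ]

noncomputable abbrev GS (S : Matrix ι ι ℝ) : Measure (EuclideanSpace ℝ ι) := multivariateGaussian 0 S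

lemma GS_charFun {S : Matrix ι ι ℝ} (hS : S.PosSemidef) (t : EuclideanSpace ℝ ι) :
    charFun (GS S) t = Complex.exp (-(((∑ i, ∑ j, t i * S i j * t j : ℝ)) : ℂ) / 2) := by
  rw [GS, charFun_multivariateGaussian hS]
  congr 1
  simp only [inner_zero_right, Complex.ofReal_zero, zero_mul, zero_sub, neg_div]
  congr 3
  simp only [dotProduct, Matrix.mulVec, Finset.mul_sum]
  simp [mul_assoc]

lemma GS_conv {S T : Matrix ι ι ℝ} (hS : S.PosSemidef) (hT : T.PosSemidef) :
    Measure.conv (GS S) (GS T) = GS (S + T) := by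
  apply Measure.ext_of_charFun
  ext t
  rw [charFun_conv, GS_charFun hS, GS_charFun hT, GS_charFun (hS.add hT), ← Complex.exp_add]
  congr 1
  simp only [Matrix.add_apply, mul_add, add_mul, Finset.sum_add_distrib]
  push_cast
  ring

lemma GS_smul {S : Matrix ι ι ℝ} (hS : S.PosSemidef) (r : ℝ) :
    (GS S).map (fun x => r • x) = GS ((r ^ 2) • S) := by
  apply Measure.ext_of_charFun
  ext t
  rw [charFun_map_smul, GS_charFun hS, GS_charFun (hS.smul (sq_nonneg r))]
  congr 4
  refine Finset.sum_congr rfl fun i _ => Finset.sum_congr rfl fun j _ => ?_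
  simp
  ring

/-- restriction map -/
def reMap (f : κ → ι) (x : EuclideanSpace ℝ ι) : EuclideanSpace ℝ κ := WithLp.toLp 2 (fun k => x (f k))

lemma reMap_continuous (f : κ → ι) : Continuous (reMap f) := by
  unfold reMap
  fun_prop

lemma GS_reMap {S : Matrix ι ι ℝ} (hS : S.PosSemidef) (f : κ → ι) :
    (GS S).map (reMap f) = GS (S.submatrix f f) := by
  apply Measure.ext_of_charFun
  ext t
  have h1 : charFun ((GS S).map (reMap f)) t
      = charFun (GS S) (WithLp.toLp 2 (fun i => ∑ k, if f k = i then t k else 0)) := by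
    rw [charFun_apply, charFun_apply, integral_map (reMap_continuous f).measurable.aemeasurable
      (by fun_prop)]
    refine integral_congr_ae (Eventually.of_forall fun x => ?_)
    simp only
    congr 3
    simp only [PiLp.inner_apply, reMap, RCLike.inner_apply, conj_trivial, Finset.sum_mul]
    rw [Finset.sum_comm]
    simp [ite_mul]
  rw [h1, GS_charFun hS, GS_charFun (hS.submatrix f)]
  congr 4
  have aux : ∀ g : ι → ℝ, ∑ i, (∑ k, if f k = i then t k else 0) * g i = ∑ k, t k * g (f k) := by
    intro g
    simp only [Finset.sum_mul]
    rw [Finset.sum_comm]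
    simp [ite_mul]
  simp only [Matrix.submatrix_apply, mul_assoc, ← Finset.mul_sum]
  rw [aux]
  refine Finset.sum_congr rfl fun k _ => ?_
  congr 1
  have := aux (fun j => S (f k) j)
  simp only [mul_comm (S (f k) _)]
  rw [aux]

lemma GS_norm_pow (S : Matrix ι ι ℝ) (k : ℕ) : Integrable (fun x => ‖x‖ ^ k) (GS S) := by
  by_cases hk : k = 0
  · simp [hk]
  have := (IsGaussian.memLp_id (GS S) (k : ℝ≥0∞) (by simp)).integrable_norm_pow hk
  simpa using this

lemma GS_mean (S : Matrix ι ι ℝ) (i : ι) : ∫ x, x i ∂(GS S) = 0 := by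
  have h := integral_id_multivariateGaussian (μ := (0 : EuclideanSpace ℝ ι)) (S := S)
  have h2 := (EuclideanSpace.proj (𝕜 := ℝ) i).integral_comp_comm (μ := GS S) (φ := fun x => x)
    (IsGaussian.integrable_fun_id)
  rw [h] at h2
  simpa using h2

lemma GS_coord_int (S : Matrix ι ι ℝ) (i : ι) : Integrable (fun x : EuclideanSpace ℝ ι => x i) (GS S) := by
  refine (GS_norm_pow S 1).mono' (by fun_prop) (Eventually.of_forall fun x => ?_)
  simpa using PiLp.norm_apply_le x i

lemma GS_coord2_int (S : Matrix ι ι ℝ) (i j : ι) :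
    Integrable (fun x : EuclideanSpace ℝ ι => x i * x j) (GS S) := by
  refine (GS_norm_pow S 2).mono' (by fun_prop) (Eventually.of_forall fun x => ?_)
  rw [norm_mul, sq]
  have h1 := PiLp.norm_apply_le x i
  have h2 := PiLp.norm_apply_le x j
  gcongr

lemma GS_cov {S : Matrix ι ι ℝ} (hS : S.PosSemidef) (i j : ι) : ∫ x, x i * x j ∂(GS S) = S i j := by
  have h := covariance_eval_multivariateGaussian (μ := (0 : EuclideanSpace ℝ ι)) hS i j
  rw [← h, covariance]
  simp only [GS_mean S, sub_zero]

end gauss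

section lse
variable {ι : Type*} [Fintype ι]

lemma taylor3 {u u1 u2 u3 : ℝ → ℝ} {C : ℝ} (h0 : ∀ t, HasDerivAt u (u1 t) t)
    (h1 : ∀ t, HasDerivAt u1 (u2 t) t) (h2 : ∀ t, HasDerivAt u2 (u3 t) t)
    (h3 : ∀ t, |u3 t| ≤ C) : |u 1 - u 0 - u1 0 - u2 0 / 2| ≤ C := by
  have key : ∀ {w w1 : ℝ → ℝ}, (∀ t, HasDerivAt w (w1 t) t) → (∀ t ∈ Set.Icc (0:ℝ) 1, |w1 t| ≤ C) →
      ∀ t ∈ Set.Icc (0:ℝ) 1, |w t - w 0| ≤ C := by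
    intro w w1 hw hC t ht
    have hC0 : 0 ≤ C := (abs_nonneg _).trans (hC 0 (by simp))
    have := norm_image_sub_le_of_norm_deriv_le_segment' (f := w) (f' := w1) (a := 0) (b := 1) (C := C)
      (fun x _ => (hw x).hasDerivWithinAt) (fun x hx => hC x ⟨hx.1, hx.2.le⟩) t ht
    rw [Real.norm_eq_abs] at this
    nlinarith [ht.1, ht.2]
  have k2 := key h2 (fun t _ => h3 t)
  have k1 := key (w := fun t => u1 t - u2 0 * t) (w1 := fun t => u2 t - u2 0)
    (fun t => by
      refine HasDerivAt.congr_deriv ((h1 t).fun_sub ((hasDerivAt_id t).const_mul (u2 0))) ?_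
      simp) k2
  have k0 := key (w := fun t => u t - u1 0 * t - u2 0 / 2 * t ^ 2)
    (w1 := fun t => u1 t - u2 0 * t - (u1 0 - u2 0 * 0))
    (fun t => by
      refine HasDerivAt.congr_deriv (((h0 t).fun_sub ((hasDerivAt_id t).const_mul (u1 0))).fun_sub
        (((hasDerivAt_id t).fun_pow 2).const_mul (u2 0 / 2))) ?_
      simp
      ring) k1 1 (by simp)
  convert k0 using 2
  ring

noncomputable def lse (x : ι → ℝ) : ℝ := Real.log (∑ i, Real.exp (x i))
noncomputable def gib (x : ι → ℝ) (i : ι) : ℝ := Real.exp (x i) / ∑ j, Real.exp (x j)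

lemma Z_pos [Nonempty ι] (x : ι → ℝ) : 0 < ∑ i, Real.exp (x i) :=
  Finset.sum_pos (fun _ _ => Real.exp_pos _) Finset.univ_nonempty

lemma gib_nonneg (x : ι → ℝ) (i : ι) : 0 ≤ gib x i := by unfold gib; positivity

lemma gib_sum [Nonempty ι] (x : ι → ℝ) : ∑ i, gib x i = 1 := by
  unfold gib; rw [← Finset.sum_div]; exact div_self (Z_pos x).ne'

lemma lse_taylor [Nonempty ι] (x h : ι → ℝ) (K : ℝ) (hK : ∀ i, |h i| ≤ K) :
    |lse (x + h) - lse x - ∑ i, gib x i * h i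
      - (∑ i, gib x i * h i ^ 2 - (∑ i, gib x i * h i) ^ 2) / 2| ≤ 6 * K ^ 3 := by
  have hK0 : 0 ≤ K := (abs_nonneg _).trans (hK (Classical.arbitrary ι))
  set S : ℕ → ℝ → ℝ := fun k t => ∑ i, h i ^ k * Real.exp (x i + t * h i) with hS
  have dS : ∀ k t, HasDerivAt (S k) (S (k+1) t) t := by
    intro k t
    have : HasDerivAt (S k) (∑ i, h i ^ k * (Real.exp (x i + t * h i) * h i)) t := by
      apply HasDerivAt.fun_sum
      intro i _
      have := (((hasDerivAt_id t).mul_const (h i)).const_add (x i)).exp.const_mul (h i ^ k)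
      simpa using this
    convert this using 1
    refine Finset.sum_congr rfl fun i _ => ?_
    ring
  have pS : ∀ t, 0 < S 0 t := fun t => by
    have := Z_pos (fun i => x i + t * h i)
    simpa [hS] using this
  set r : ℕ → ℝ → ℝ := fun k t => S k t / S 0 t with hr
  have dr : ∀ k t, HasDerivAt (r k) (r (k+1) t - r k t * r 1 t) t := by
    intro k t
    refine HasDerivAt.congr_deriv ((dS k t).fun_div (dS 0 t) (pS t).ne') ?_
    have := (pS t).ne'
    simp only [hr]
    field_simp
  have br : ∀ k t, |r k t| ≤ K ^ k := by
    intro k t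
    simp only [hr]
    rw [abs_div, abs_of_pos (pS t), div_le_iff₀ (pS t)]
    calc |S k t| ≤ ∑ i, |h i ^ k * Real.exp (x i + t * h i)| := Finset.abs_sum_le_sum_abs _ _
      _ ≤ ∑ i, K ^ k * Real.exp (x i + t * h i) := by
          refine Finset.sum_le_sum fun i _ => ?_
          rw [abs_mul, abs_pow, Real.abs_exp]
          have := hK i
          gcongr
      _ = K ^ k * S 0 t := by simp [hS, Finset.mul_sum]
  have d0 : ∀ t, HasDerivAt (fun t => Real.log (S 0 t)) (r 1 t) t := fun t => by
    simpa [hr] using (dS 0 t).log (pS t).ne'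
  have d1 : ∀ t, HasDerivAt (r 1) (r 2 t - r 1 t ^ 2) t := fun t => by
    convert dr 1 t using 1; ring
  have d2 : ∀ t, HasDerivAt (fun t => r 2 t - r 1 t ^ 2)
      (r 3 t - r 2 t * r 1 t - 2 * r 1 t * (r 2 t - r 1 t ^ 2)) t := fun t => by
    refine HasDerivAt.congr_deriv ((dr 2 t).fun_sub ((d1 t).fun_pow 2)) ?_
    simp
  have T := taylor3 (C := 6 * K ^ 3) d0 d1 d2 (fun t => by
    have b1 := br 1 t
    have b2 := br 2 t
    have b3 := br 3 t
    rw [pow_one] at b1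
    have e1 : |r 2 t * r 1 t| ≤ K ^ 2 * K := by rw [abs_mul]; gcongr
    have e2 : |r 1 t ^ 3| ≤ K ^ 3 := by rw [abs_pow]; gcongr
    rw [abs_le] at *
    constructor <;> nlinarith)
  have g1 : ∀ k, r k 0 = ∑ i, gib x i * h i ^ k := by
    intro k
    simp only [hr, hS, gib, Finset.sum_div]
    refine Finset.sum_congr rfl fun i _ => ?_
    simp
    ring
  rw [g1 1, g1 2] at T
  simpa [hS, lse] using T

lemma lse_ge [Nonempty ι] (x : ι → ℝ) (i : ι) : x i ≤ lse x := by
  rw [lse, Real.le_log_iff_exp_le (Z_pos x)]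
  exact Finset.single_le_sum (f := fun i => Real.exp (x i)) (fun _ _ => (Real.exp_pos _).le) (Finset.mem_univ i)

lemma lse_le [Nonempty ι] (x : ι → ℝ) (K : ℝ) (h : ∀ i, x i ≤ K) : lse x ≤ Real.log (Fintype.card ι) + K := by
  have hc : (0:ℝ) < Fintype.card ι := by exact_mod_cast Fintype.card_pos
  rw [lse, Real.log_le_iff_le_exp (Z_pos x), Real.exp_add, Real.exp_log hc]
  calc _ ≤ ∑ i : ι, Real.exp K := Finset.sum_le_sum fun i _ => Real.exp_le_exp.2 (h i)
    _ = _ := by simp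

lemma lse_cont [Nonempty ι] : Continuous (lse : (ι → ℝ) → ℝ) := by
  unfold lse
  exact Continuous.log (by fun_prop) (fun x => (Z_pos x).ne')

end lse

section compare
variable {ι : Type*} [Fintype ι] [DecidableEq ι] [Nonempty ι]

lemma lse_abs (x : EuclideanSpace ℝ ι) : |lse x.ofLp| ≤ Real.log (Fintype.card ι) + ‖x‖ := by
  have hx : ∀ i, |x.ofLp i| ≤ ‖x‖ := fun i => PiLp.norm_apply_le x i
  have hc : 0 ≤ Real.log (Fintype.card ι) := Real.log_natCast_nonneg _
  rw [abs_le]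
  constructor
  · have := lse_ge x.ofLp (Classical.arbitrary ι)
    have := (abs_le.1 (hx (Classical.arbitrary ι))).1
    linarith
  · exact lse_le _ _ fun i => (abs_le.1 (hx i)).2

lemma lse_cont' : Continuous (fun x : EuclideanSpace ℝ ι => lse x.ofLp) :=
  lse_cont.comp (by fun_prop)

lemma lse_int (S : Matrix ι ι ℝ) (x : EuclideanSpace ℝ ι) :
    Integrable (fun y => lse (x + y).ofLp) (GS S) := by
  have hb : Integrable (fun y => (Real.log (Fintype.card ι) + ‖x‖) + ‖y‖ ^ 1) (GS S) :=
    (integrable_const _).add (GS_norm_pow S 1)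
  refine hb.mono' (Continuous.aestronglyMeasurable (lse_cont'.comp (by fun_prop)))
    (Eventually.of_forall fun y => ?_)
  have := lse_abs (x + y)
  have := norm_add_le x y
  rw [Real.norm_eq_abs, pow_one]
  linarith

lemma lse_int0 (S : Matrix ι ι ℝ) : Integrable (fun y : EuclideanSpace ℝ ι => lse y.ofLp) (GS S) := by
  simpa using lse_int S 0

noncomputable def QQ (S : Matrix ι ι ℝ) (x : EuclideanSpace ℝ ι) : ℝ :=
  ∑ a, gib x.ofLp a * S a a - ∑ a, ∑ b, gib x.ofLp a * gib x.ofLp b * S a b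

lemma QQ_smul (S : Matrix ι ι ℝ) (x : EuclideanSpace ℝ ι) (h : ℝ) : QQ (h • S) x = h * QQ S x := by
  simp only [QQ, Matrix.smul_apply, smul_eq_mul, mul_sub, Finset.mul_sum]
  congr 1
  · exact Finset.sum_congr rfl fun _ _ => by ring
  · exact Finset.sum_congr rfl fun _ _ => Finset.sum_congr rfl fun _ _ => by ring

lemma QQ_mono {S T : Matrix ι ι ℝ} (hd : ∀ a, S a a = T a a) (hl : ∀ a b, S a b ≤ T a b)
    (x : EuclideanSpace ℝ ι) : QQ T x ≤ QQ S x := by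
  unfold QQ
  simp only [hd]
  apply sub_le_sub_left
  refine Finset.sum_le_sum fun a _ => Finset.sum_le_sum fun b _ => ?_
  exact mul_le_mul_of_nonneg_left (hl a b) (mul_nonneg (gib_nonneg _ _) (gib_nonneg _ _))

noncomputable def MM (S : Matrix ι ι ℝ) : ℝ := 6 * ∫ y, ‖y‖ ^ 3 ∂(GS S)

lemma step1 {S : Matrix ι ι ℝ} (hS : S.PosSemidef) (x : EuclideanSpace ℝ ι) :
    |∫ y, lse (x + y).ofLp ∂(GS S) - lse x.ofLp - QQ S x / 2| ≤ MM S := by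
  set p := gib x.ofLp with hp
  have i1 : Integrable (fun y : EuclideanSpace ℝ ι => ∑ a, p a * y a) (GS S) :=
    integrable_finsetSum _ fun a _ => (GS_coord_int S a).const_mul _
  have i2 : Integrable (fun y : EuclideanSpace ℝ ι => ∑ a, p a * (y a * y a)) (GS S) :=
    integrable_finsetSum _ fun a _ => (GS_coord2_int S a a).const_mul _
  have i3 : Integrable (fun y : EuclideanSpace ℝ ι => ∑ a, ∑ b, p a * p b * (y a * y b)) (GS S) :=
    integrable_finsetSum _ fun a _ => integrable_finsetSum _ fun b _ => (GS_coord2_int S a b).const_mul _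
  have e1 : ∫ y : EuclideanSpace ℝ ι, ∑ a, p a * y a ∂(GS S) = 0 := by
    rw [integral_finsetSum _ fun a _ => (GS_coord_int S a).const_mul _]
    simp [integral_const_mul, GS_mean]
  have e2 : ∫ y : EuclideanSpace ℝ ι, ∑ a, p a * (y a * y a) ∂(GS S) = ∑ a, p a * S a a := by
    rw [integral_finsetSum _ fun a _ => (GS_coord2_int S a a).const_mul _]
    simp only [integral_const_mul, GS_cov hS]
  have e3 : ∫ y : EuclideanSpace ℝ ι, ∑ a, ∑ b, p a * p b * (y a * y b) ∂(GS S)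
      = ∑ a, ∑ b, p a * p b * S a b := by
    rw [integral_finsetSum _ fun a _ => integrable_finsetSum _ fun b _ => (GS_coord2_int S a b).const_mul _]
    refine Finset.sum_congr rfl fun a _ => ?_
    rw [integral_finsetSum _ fun b _ => (GS_coord2_int S a b).const_mul _]
    simp only [integral_const_mul, GS_cov hS]
  have key : ∫ y, lse (x + y).ofLp ∂(GS S) - lse x.ofLp - QQ S x / 2
      = ∫ y : EuclideanSpace ℝ ι, (lse (x + y).ofLp - lse x.ofLp - ∑ a, p a * y a
        - (∑ a, p a * (y a * y a) - ∑ a, ∑ b, p a * p b * (y a * y b)) / 2) ∂(GS S) := by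
    have j1 : Integrable (fun y => lse (x + y).ofLp - lse x.ofLp) (GS S) :=
      (lse_int S x).sub (integrable_const _)
    have j2 : Integrable (fun y => lse (x + y).ofLp - lse x.ofLp - ∑ a, p a * y.ofLp a) (GS S) :=
      j1.sub i1
    have j3 : Integrable (fun y : EuclideanSpace ℝ ι => (∑ a, p a * (y.ofLp a * y.ofLp a)
        - ∑ a, ∑ b, p a * p b * (y.ofLp a * y.ofLp b)) / 2) (GS S) := (i2.sub i3).div_const 2
    rw [integral_sub j2 j3, integral_sub j1 i1,
      integral_sub (lse_int S x) (integrable_const _), integral_div, integral_sub i2 i3, e1, e2, e3]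
    simp [QQ, hp]
  rw [key, MM, ← integral_const_mul, ← Real.norm_eq_abs]
  refine norm_integral_le_of_norm_le ((GS_norm_pow S 3).const_mul 6) (Eventually.of_forall fun y => ?_)
  have := lse_taylor x.ofLp y.ofLp ‖y‖ (fun i => PiLp.norm_apply_le y i)
  rw [Real.norm_eq_abs]
  convert this using 2
  simp only [sq, Finset.sum_mul_sum]
  congr 3
  refine Finset.sum_congr rfl fun a _ => Finset.sum_congr rfl fun b _ => by ring

lemma MM_smul {S : Matrix ι ι ℝ} (hS : S.PosSemidef) (r : ℝ) (hr : 0 ≤ r) :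
    MM ((r ^ 2) • S) = r ^ 3 * MM S := by
  unfold MM
  rw [← GS_smul hS, integral_map (by fun_prop) (by fun_prop)]
  simp only [norm_smul, mul_pow, integral_const_mul, Real.norm_eq_abs, abs_of_nonneg hr]
  ring

lemma step2 {S T : Matrix ι ι ℝ} (hS : S.PosSemidef) (hT : T.PosSemidef)
    (hd : ∀ a, S a a = T a a) (hl : ∀ a b, S a b ≤ T a b) (r : ℝ) (hr : 0 ≤ r)
    (x : EuclideanSpace ℝ ι) :
    ∫ y, lse (x + y).ofLp ∂(GS ((r ^ 2) • T)) - r ^ 3 * (MM S + MM T) ≤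
      ∫ y, lse (x + y).ofLp ∂(GS ((r ^ 2) • S)) := by
  have h1 := step1 (hS.smul (sq_nonneg r)) x
  have h2 := step1 (hT.smul (sq_nonneg r)) x
  rw [MM_smul hS r hr, QQ_smul] at h1
  rw [MM_smul hT r hr, QQ_smul] at h2
  have h3 := mul_le_mul_of_nonneg_left (QQ_mono hd hl x) (sq_nonneg r)
  rw [abs_le] at h1 h2
  linarith [h1.1, h2.2]

lemma lse_conv {S T : Matrix ι ι ℝ} (hS : S.PosSemidef) (hT : T.PosSemidef) :
    Integrable (fun x => ∫ y, lse (x + y).ofLp ∂(GS T)) (GS S) ∧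
    ∫ x, lse x.ofLp ∂(GS (S + T)) = ∫ x, ∫ y, lse (x + y).ofLp ∂(GS T) ∂(GS S) := by
  have hi := lse_int0 (S + T)
  rw [← GS_conv hS hT] at hi ⊢
  refine ⟨?_, integral_conv hi⟩
  have h2 : Integrable (fun p : EuclideanSpace ℝ ι × EuclideanSpace ℝ ι => lse (p.1 + p.2).ofLp)
      ((GS S).prod (GS T)) := by
    rw [Measure.conv, integrable_map_measure lse_cont'.aestronglyMeasurable (by fun_prop)] at hi
    exact hi
  exact h2.integral_prod_left

lemma step3 {S T W : Matrix ι ι ℝ} (hS : S.PosSemidef) (hT : T.PosSemidef) (hW : W.PosSemidef)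
    (hd : ∀ a, S a a = T a a) (hl : ∀ a b, S a b ≤ T a b) (r : ℝ) (hr : 0 ≤ r) :
    ∫ y, lse y.ofLp ∂(GS (W + (r ^ 2) • T)) - r ^ 3 * (MM S + MM T) ≤
      ∫ y, lse y.ofLp ∂(GS (W + (r ^ 2) • S)) := by
  obtain ⟨i1, e1⟩ := lse_conv hW (hS.smul (sq_nonneg r))
  obtain ⟨i2, e2⟩ := lse_conv hW (hT.smul (sq_nonneg r))
  rw [e1, e2]
  have := integral_mono (i2.sub (integrable_const (r ^ 3 * (MM S + MM T)))) i1
    (fun x => step2 hS hT hd hl r hr x)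
  simp only [Pi.sub_apply] at this
  rw [integral_sub i2 (integrable_const _)] at this
  simpa using this

theorem slepian {S T : Matrix ι ι ℝ} (hS : S.PosSemidef) (hT : T.PosSemidef)
    (hd : ∀ a, S a a = T a a) (hl : ∀ a b, S a b ≤ T a b) :
    ∫ y, lse y.ofLp ∂(GS T) ≤ ∫ y, lse y.ofLp ∂(GS S) := by
  set M := MM S + MM T
  have main : ∀ N : ℕ, ∫ y, lse y.ofLp ∂(GS T) - M * (1 / Real.sqrt ((N : ℝ) + 1))
      ≤ ∫ y, lse y.ofLp ∂(GS S) := by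
    intro N
    set n : ℝ := (N : ℝ) + 1 with hn
    have hn0 : 0 < n := by positivity
    set r : ℝ := 1 / Real.sqrt n with hr
    have hr0 : 0 ≤ r := by positivity
    have hr2 : r ^ 2 = 1 / n := by rw [hr, div_pow, Real.sq_sqrt hn0.le, one_pow]
    have ind : ∀ k : ℕ, k ≤ N + 1 → ∫ y, lse y.ofLp ∂(GS T) - k * (r ^ 3 * M)
        ≤ ∫ y, lse y.ofLp ∂(GS ((k / n) • S + (1 - k / n) • T)) := by
      intro k
      induction k with
      | zero => simp
      | succ k ih =>
        intro hk
        have ih := ih (by omega)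
        have hk' : (k : ℝ) + 1 ≤ n := by rw [hn]; exact_mod_cast hk
        have hW : ((k / n) • S + (1 - (k + 1) / n) • T).PosSemidef := by
          refine (hS.smul (by positivity)).add (hT.smul ?_)
          rw [sub_nonneg, div_le_one hn0]; exact hk'
        have h3 := step3 hS hT hW hd hl r hr0
        have a1 : (k / n) • S + (1 - (k + 1) / n) • T + r ^ 2 • T = (k / n) • S + (1 - k / n) • T := by
          rw [add_assoc, ← add_smul, hr2]; congr 2; ring
        have a2 : (k / n) • S + (1 - (k + 1) / n) • T + r ^ 2 • S
            = (((k + 1 : ℕ) : ℝ) / n) • S + (1 - ((k + 1 : ℕ) : ℝ) / n) • T := by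
          rw [add_right_comm, ← add_smul, hr2]; push_cast; congr 2; ring
        rw [a1, a2] at h3
        push_cast at h3 ⊢
        linarith
    have := ind (N + 1) le_rfl
    have e : ((N + 1 : ℕ) : ℝ) / n = 1 := by rw [hn]; push_cast; exact div_self (by positivity)
    rw [e] at this
    simp only [one_smul, sub_self, zero_smul, add_zero] at this
    have e2 : ((N + 1 : ℕ) : ℝ) * (r ^ 3 * M) = M * r := by
      have : ((N + 1 : ℕ) : ℝ) = n := by rw [hn]; push_cast; rfl
      rw [this, show r ^ 3 = r ^ 2 * r by ring, hr2]
      field_simp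
    rw [e2] at this
    exact this
  have lim : Tendsto (fun N : ℕ => ∫ y, lse y.ofLp ∂(GS T) - M * (1 / Real.sqrt ((N : ℝ) + 1))) atTop
      (nhds (∫ y, lse y.ofLp ∂(GS T) - M * 0)) := by
    refine tendsto_const_nhds.sub (tendsto_const_nhds.mul ?_)
    have h1 : Tendsto (fun N : ℕ => Real.sqrt ((N : ℝ) + 1)) atTop atTop :=
      Real.tendsto_sqrt_atTop.comp (tendsto_atTop_add_const_right _ _ tendsto_natCast_atTop_atTop)
    simp only [one_div]
    exact h1.inv_tendsto_atTop
  have := le_of_tendsto' lim main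
  simpa using this

end compare

section sk

def CC (n : ℕ) : Matrix (Fin n → Bool) (Fin n → Bool) ℝ :=
  fun b c => (∑ i, signVec b i * signVec c i) ^ 2 / (2 * n)

lemma signVec_sq {n : ℕ} (b : Fin n → Bool) (i : Fin n) : signVec b i * signVec b i = 1 := by
  unfold signVec; split_ifs <;> norm_num

lemma CC_diag (n : ℕ) (b : Fin n → Bool) : CC n b b = n / 2 := by
  simp only [CC, signVec_sq]
  rcases Nat.eq_zero_or_pos n with rfl | h
  · simp
  · have : (n : ℝ) ≠ 0 := by positivity
    simp
    field_simp

lemma CC_psd (n : ℕ) : (CC n).PosSemidef := by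
  let W : Matrix (Fin n → Bool) (Fin n × Fin n) ℝ := fun b p => signVec b p.1 * signVec b p.2
  have : CC n = (1 / (2 * n : ℝ)) • (W * W.conjTranspose) := by
    ext b c
    rw [Matrix.smul_apply, Matrix.mul_apply]
    simp only [Matrix.conjTranspose_apply, star_trivial]
    simp only [CC, W, sq, Finset.sum_mul_sum, Fintype.sum_prod_type, star_trivial, smul_eq_mul]
    rw [div_eq_inv_mul, one_div]
    congr 1
    exact Finset.sum_congr rfl fun _ _ => Finset.sum_congr rfl fun _ _ => by ring
  rw [this]
  exact (Matrix.posSemidef_self_mul_conjTranspose W).smul (by positivity)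

def FF (n : ℕ) (β : ℝ) : ℝ := ∫ x, lse (β • x).ofLp ∂(GS (CC n))

lemma FF_eq (n : ℕ) (β : ℝ) : FF n β = ∫ x, lse x.ofLp ∂(GS ((β ^ 2) • CC n)) := by
  rw [← GS_smul (CC_psd n), integral_map (by fun_prop) lse_cont'.aestronglyMeasurable]
  rfl

def fst' {m n : ℕ} (b : Fin (m + n) → Bool) : Fin m → Bool := fun i => b (Fin.castAdd n i)
def snd' {m n : ℕ} (b : Fin (m + n) → Bool) : Fin n → Bool := fun i => b (Fin.natAdd m i)

lemma titu (a b : ℝ) (m n : ℕ) (ha : m = 0 → a = 0) (hb : n = 0 → b = 0) :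
    (a + b) ^ 2 / (2 * ((m + n : ℕ) : ℝ)) ≤ a ^ 2 / (2 * m) + b ^ 2 / (2 * n) := by
  rcases Nat.eq_zero_or_pos m with rfl | hm
  · simp [ha rfl]
  rcases Nat.eq_zero_or_pos n with rfl | hn
  · simp [hb rfl]
  have hm' : (0:ℝ) < m := by exact_mod_cast hm
  have hn' : (0:ℝ) < n := by exact_mod_cast hn
  push_cast
  rw [div_add_div _ _ (by positivity) (by positivity), div_le_div_iff₀ (by positivity) (by positivity)]
  nlinarith [sq_nonneg (a * n - b * m), mul_pos hm' hn']

lemma lse_split {m n : ℕ} (x : (Fin m → Bool) → ℝ) (y : (Fin n → Bool) → ℝ) :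
    lse (fun b : Fin (m + n) → Bool => x (fst' b) + y (snd' b)) = lse x + lse y := by
  unfold lse
  rw [← Real.log_mul (Z_pos x).ne' (Z_pos y).ne', Finset.sum_mul_sum, ← Fintype.sum_prod_type']
  congr 1
  refine Fintype.sum_equiv (Fin.appendEquiv m n).symm _ _ fun b => ?_
  rw [Real.exp_add]
  rfl

lemma FF_super (m n : ℕ) (β : ℝ) : FF m β + FF n β ≤ FF (m + n) β := by
  set T1 := (β ^ 2 • CC m).submatrix (fst' (m := m) (n := n)) fst'
  set T2 := (β ^ 2 • CC n).submatrix (snd' (m := m) (n := n)) snd'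
  have pm : (β ^ 2 • CC m).PosSemidef := (CC_psd m).smul (sq_nonneg β)
  have pn : (β ^ 2 • CC n).PosSemidef := (CC_psd n).smul (sq_nonneg β)
  have p1 : T1.PosSemidef := pm.submatrix _
  have p2 : T2.PosSemidef := pn.submatrix _
  have e : ∫ x, lse x.ofLp ∂(GS (T1 + T2)) = FF m β + FF n β := by
    rw [(lse_conv p1 p2).2, ← GS_reMap pm, ← GS_reMap pn]
    rw [integral_map (reMap_continuous _).measurable.aemeasurable]
    · have hcx : ∀ x : EuclideanSpace ℝ (Fin m → Bool),
          Continuous (fun y => lse (reMap (fst' (m := m) (n := n)) x + y).ofLp) :=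
        fun x => lse_cont'.comp (by fun_prop)
      have : ∀ x : EuclideanSpace ℝ (Fin m → Bool),
          ∫ y, lse (reMap (fst' (m := m) (n := n)) x + y).ofLp ∂((GS (β ^ 2 • CC n)).map (reMap snd'))
            = lse x.ofLp + FF n β := by
        intro x
        rw [integral_map (reMap_continuous _).measurable.aemeasurable
          (Continuous.aestronglyMeasurable (hcx x))]
        have : ∀ y : EuclideanSpace ℝ (Fin n → Bool),
            lse (reMap (fst' (m := m) (n := n)) x + reMap snd' y).ofLp = lse x.ofLp + lse y.ofLp :=
          fun y => lse_split x.ofLp y.ofLp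
        simp only [this]
        rw [integral_add (integrable_const _) (lse_int0 _), FF_eq]
        simp
      simp only [this]
      rw [integral_add (lse_int0 _) (integrable_const _), FF_eq m]
      simp
    · rw [GS_reMap pm, GS_reMap pn]
      exact (lse_conv p1 p2).1.aestronglyMeasurable
  rw [← e, FF_eq]
  refine slepian ((CC_psd _).smul (sq_nonneg β)) (p1.add p2) ?_ ?_
  · intro a
    simp only [T1, T2, Matrix.smul_apply, Matrix.add_apply, Matrix.submatrix_apply, CC_diag, smul_eq_mul]
    push_cast
    ring
  · intro a b
    simp only [T1, T2, Matrix.smul_apply, Matrix.add_apply, Matrix.submatrix_apply, smul_eq_mul, ← mul_add]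
    refine mul_le_mul_of_nonneg_left ?_ (sq_nonneg β)
    simp only [CC, Fin.sum_univ_add]
    refine titu _ _ m n ?_ ?_
    · rintro rfl; simp
    · rintro rfl; simp

lemma exp_coord (n : ℕ) (β : ℝ) (b : Fin n → Bool) :
    Integrable (fun x : EuclideanSpace ℝ (Fin n → Bool) => Real.exp (β * x b)) (GS (CC n)) ∧
    ∫ x, Real.exp (β * x b) ∂(GS (CC n)) = Real.exp (n * β ^ 2 / 4) := by
  have mp := measurePreserving_eval_multivariateGaussian (μ := 0) (CC_psd n) (i := b)
  constructor
  · have h := integrable_exp_mul_gaussianReal (μ := (0 : EuclideanSpace ℝ (Fin n → Bool)) b)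
      (v := (CC n b b).toNNReal) β
    rw [← mp.map_eq, integrable_map_measure (by fun_prop) (by fun_prop)] at h
    exact h
  · have h := mgf_gaussianReal mp.map_eq β
    rw [mgf] at h
    rw [h, CC_diag, Real.coe_toNNReal _ (by positivity)]
    congr 1
    simp
    ring

lemma FF_le (n : ℕ) (β : ℝ) : FF n β ≤ n * (Real.log 2 + β ^ 2 / 4) := by
  set a : ℝ := 2 ^ n * Real.exp (n * β ^ 2 / 4) with ha
  have ha0 : 0 < a := by positivity
  have hb : ∀ x : EuclideanSpace ℝ (Fin n → Bool),
      lse (β • x).ofLp ≤ (∑ b, Real.exp (β * x b)) / a - 1 + Real.log a := by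
    intro x
    have hz := Z_pos (β • x).ofLp
    have := Real.log_le_sub_one_of_pos (div_pos hz ha0)
    rw [Real.log_div hz.ne' ha0.ne'] at this
    have h2 : lse (β • x).ofLp = Real.log (∑ i, Real.exp ((β • x).ofLp i)) := rfl
    rw [h2]
    simp at this ⊢
    linarith
  have i0 : Integrable (fun x : EuclideanSpace ℝ (Fin n → Bool) => ∑ b, Real.exp (β * x b)) (GS (CC n)) :=
    integrable_finsetSum _ fun b _ => (exp_coord n β b).1
  have i1 : Integrable (fun x : EuclideanSpace ℝ (Fin n → Bool) => (∑ b, Real.exp (β * x b)) / a - 1) (GS (CC n)) :=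
    (i0.div_const a).sub (integrable_const _)
  have i2 : Integrable (fun x : EuclideanSpace ℝ (Fin n → Bool) => lse (β • x).ofLp) (GS (CC n)) := by
    have := lse_int0 (β ^ 2 • CC n)
    rw [← GS_smul (CC_psd n), integrable_map_measure lse_cont'.aestronglyMeasurable (by fun_prop)] at this
    exact this
  have h := integral_mono i2 (i1.add (integrable_const (Real.log a))) hb
  simp only [Pi.add_apply] at h
  rw [integral_add i1 (integrable_const _), integral_sub (i0.div_const a) (integrable_const _), integral_div,
    integral_finsetSum _ fun b _ => (exp_coord n β b).1] at h
  simp only [(exp_coord n β _).2] at h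
  have e : (∑ b : Fin n → Bool, Real.exp (n * β ^ 2 / 4)) / a = 1 := by
    rw [ha]; simp
  rw [e] at h
  have e2 : Real.log a = n * (Real.log 2 + β ^ 2 / 4) := by
    rw [ha, Real.log_mul (by positivity) (by positivity), Real.log_exp, Real.log_pow]; ring
  rw [e2] at h
  simpa [FF] using h

def GG (n : ℕ) : ℝ := ∫ x : EuclideanSpace ℝ (Fin n → Bool), (⨆ b, x b) ∂(GS (CC n))

lemma sup_le_lse (n : ℕ) (β : ℝ) (hβ : 0 < β) (x : EuclideanSpace ℝ (Fin n → Bool)) :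
    (⨆ b, x b) ≤ lse (β • x).ofLp / β ∧ lse (β • x).ofLp / β ≤ (⨆ b, x b) + n * Real.log 2 / β := by
  constructor
  · refine ciSup_le fun b => ?_
    rw [le_div_iff₀ hβ]
    have := lse_ge (β • x).ofLp b
    rw [PiLp.smul_apply, smul_eq_mul] at this
    linarith
  · have := lse_le (β • x).ofLp (β * ⨆ b, x b) (fun b => by
      simp only [PiLp.smul_apply, smul_eq_mul]
      exact mul_le_mul_of_nonneg_left (le_ciSup (f := fun b => x b) (Set.finite_range _).bddAbove b) hβ.le)
    rw [div_le_iff₀ hβ]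
    have e : ((⨆ b, x b) + n * Real.log 2 / β) * β = n * Real.log 2 + β * ⨆ b, x b := by
      field_simp; ring
    rw [e]
    simpa using this

lemma sup_meas (n : ℕ) : Measurable (fun x : EuclideanSpace ℝ (Fin n → Bool) => ⨆ b, x b) :=
  Measurable.iSup fun b => by fun_prop

lemma FF_GG (n : ℕ) (β : ℝ) (hβ : 0 < β) : GG n ≤ FF n β / β ∧ FF n β / β ≤ GG n + n * Real.log 2 / β := by
  have i1 : Integrable (fun x : EuclideanSpace ℝ (Fin n → Bool) => lse (β • x).ofLp / β) (GS (CC n)) := by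
    have := lse_int0 (β ^ 2 • CC n)
    rw [← GS_smul (CC_psd n), integrable_map_measure lse_cont'.aestronglyMeasurable (by fun_prop)] at this
    exact this.div_const β
  have i2 : Integrable (fun x : EuclideanSpace ℝ (Fin n → Bool) => ⨆ b, x b) (GS (CC n)) := by
    refine (GS_norm_pow (CC n) 1).mono' (sup_meas n).aestronglyMeasurable (Eventually.of_forall fun x => ?_)
    have hx : ∀ i, |x.ofLp i| ≤ ‖x‖ := fun i => PiLp.norm_apply_le x i
    rw [Real.norm_eq_abs, pow_one, abs_le]
    constructor
    · exact (abs_le.1 (hx (fun _ => true))).1.trans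
        (le_ciSup (f := fun b => x b) (Set.finite_range _).bddAbove _)
    · exact ciSup_le fun b => (abs_le.1 (hx b)).2
  constructor
  · have := integral_mono i2 i1 (fun x => (sup_le_lse n β hβ x).1)
    rw [integral_div] at this
    exact this
  · have := integral_mono i1 (i2.add (integrable_const _)) (fun x => (sup_le_lse n β hβ x).2)
    simp only [Pi.add_apply] at this
    rw [integral_div, integral_add i2 (integrable_const _)] at this
    simpa [FF, GG] using this

lemma GG_super (m n : ℕ) : GG m + GG n ≤ GG (m + n) := by
  have h : ∀ k : ℕ, GG m + GG n ≤ GG (m + n) + ((m + n : ℕ) : ℝ) * Real.log 2 / ((k : ℝ) + 1) := by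
    intro k
    have hk : (0:ℝ) < (k : ℝ) + 1 := by positivity
    have h1 := (FF_GG m _ hk).1
    have h2 := (FF_GG n _ hk).1
    have h3 := (FF_GG (m + n) _ hk).2
    have h4 := div_le_div_of_nonneg_right (FF_super m n ((k : ℝ) + 1)) hk.le
    rw [add_div] at h4
    linarith
  have lim : Tendsto (fun k : ℕ => GG (m + n) + ((m + n : ℕ) : ℝ) * Real.log 2 / ((k : ℝ) + 1)) atTop
      (nhds (GG (m + n) + 0)) := by
    refine tendsto_const_nhds.add (tendsto_const_nhds.div_atTop ?_)
    exact tendsto_atTop_add_const_right _ _ tendsto_natCast_atTop_atTop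
  simpa using ge_of_tendsto' lim h

lemma fekete {u : ℕ → ℝ} (hu : ∀ m n, u m + u n ≤ u (m + n)) (C : ℝ) (hC : ∀ n, u n ≤ n * C) :
    ∃ L, Tendsto (fun n : ℕ => (1 / (n : ℝ)) * u n) atTop (nhds L) := by
  have hs : Subadditive (fun n => - u n) := fun m n => by have := hu m n; linarith
  have := hs.tendsto_lim ⟨-|C|, by
    rintro _ ⟨n, rfl⟩
    rcases Nat.eq_zero_or_pos n with rfl | hn
    · simp
    · have hn' : (0:ℝ) < n := by exact_mod_cast hn
      simp only
      rw [le_div_iff₀ hn']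
      have := hC n
      have := le_abs_self C
      nlinarith⟩
  refine ⟨-hs.lim, ?_⟩
  have := this.neg
  refine this.congr fun n => ?_
  ring

end sk

section law

abbrev PP (n : ℕ) := {p : Fin n × Fin n // p.1 ≤ p.2}

lemma tri_sum {n : ℕ} (g : Fin n → Fin n → ℝ) (hg : ∀ i j, g i j = g j i) :
    ∑ i, ∑ j, g i j = ∑ p : PP n, (if p.1.1 = p.1.2 then 1 else 2) * g p.1.1 p.1.2 := by
  set k : Fin n → Fin n → ℝ := fun i j => if i ≤ j then (if i = j then 1 else 2) * g i j else 0 with hk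
  have h1 : ∑ p : PP n, (if p.1.1 = p.1.2 then 1 else 2) * g p.1.1 p.1.2 = ∑ i, ∑ j, k i j := by
    rw [← Fintype.sum_prod_type']
    simp only [hk]
    rw [← Finset.sum_filter]
    symm
    exact Finset.sum_subtype (p := fun p : Fin n × Fin n => p.1 ≤ p.2)
      (Finset.univ.filter fun p : Fin n × Fin n => p.1 ≤ p.2) (by simp)
      (fun p => (if p.1 = p.2 then (1:ℝ) else 2) * g p.1 p.2)
  have h2 : ∀ i j, k i j + k j i = 2 * g i j := by
    intro i j
    simp only [hk]
    rcases lt_trichotomy i j with h | h | h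
    · simp [h.le, h.ne, h.not_ge]
    · subst h; simp; ring
    · simp [h.le, h.ne, h.not_ge, hg i j]
  have h3 : ∑ i, ∑ j, (k i j + k j i) = 2 * ∑ i, ∑ j, k i j := by
    simp only [Finset.sum_add_distrib]
    rw [Finset.sum_comm (f := fun i j => k j i)]
    ring
  simp only [h2, ← Finset.mul_sum] at h3
  rw [h1]
  linarith

def vv (n : ℕ) (p : PP n) : ℝ≥0 := if p.1.1 = p.1.2 then 2 / (n : ℝ≥0) else 1 / (n : ℝ≥0)
def ww (n : ℕ) (p : PP n) (b : Fin n → Bool) : ℝ :=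
  (if p.1.1 = p.1.2 then 1 else 2) * (1 / 2 * (signVec b p.1.1 * signVec b p.1.2))

lemma CC_eq (n : ℕ) (b c : Fin n → Bool) : CC n b c = ∑ p, (vv n p : ℝ) * (ww n p b * ww n p c) := by
  have := tri_sum (fun i j => 1 / (2 * n : ℝ) * ((signVec b i * signVec c i) * (signVec b j * signVec c j)))
    (fun i j => by ring)
  simp only [← Finset.mul_sum] at this
  rw [CC, sq, Finset.sum_mul_sum, div_eq_inv_mul, ← one_div]
  simp only [← Finset.mul_sum]
  rw [this]
  refine Finset.sum_congr rfl fun p _ => ?_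
  unfold vv ww
  split_ifs <;> push_cast <;> ring

lemma goe_law {Ω : Type*} [MeasurableSpace Ω] (μ : Measure Ω) [IsProbabilityMeasure μ] (n : ℕ)
    (A : Ω → Fin n → Fin n → ℝ) (h : IsGOE μ n A) :
    Measurable (fun ω => (WithLp.toLp 2 (fun b : Fin n → Bool =>
      (1/2) * ∑ i, ∑ j, signVec b i * A ω i j * signVec b j) : EuclideanSpace ℝ (Fin n → Bool))) ∧
    μ.map (fun ω => (WithLp.toLp 2 (fun b : Fin n → Bool =>
      (1/2) * ∑ i, ∑ j, signVec b i * A ω i j * signVec b j) : EuclideanSpace ℝ (Fin n → Bool)))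
      = GS (CC n) := by
  obtain ⟨hm, hsymm, hind, hdiag, hoff⟩ := h
  have hX : ∀ ω (b : Fin n → Bool), (1/2) * ∑ i, ∑ j, signVec b i * A ω i j * signVec b j
      = ∑ p : PP n, ww n p b * A ω p.1.1 p.1.2 := by
    intro ω b
    rw [tri_sum _ (fun i j => by rw [hsymm ω i j]; ring), Finset.mul_sum]
    refine Finset.sum_congr rfl fun p _ => ?_
    unfold ww
    ring
  have hmX : Measurable (fun ω => (WithLp.toLp 2 (fun b : Fin n → Bool =>
      (1/2) * ∑ i, ∑ j, signVec b i * A ω i j * signVec b j) : EuclideanSpace ℝ (Fin n → Bool))) := by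
    refine (WithLp.measurable_toLp 2 _).comp (measurable_pi_lambda _ fun b => ?_)
    refine Measurable.const_mul (Finset.measurable_sum _ fun i _ => Finset.measurable_sum _ fun j _ => ?_) _
    exact ((hm i j).const_mul _).mul_const _
  refine ⟨hmX, ?_⟩
  have hmA : ∀ p : PP n, Measurable (fun ω => A ω p.1.1 p.1.2) := fun p => hm _ _
  have hlaw : μ.map (fun ω (p : PP n) => A ω p.1.1 p.1.2) = Measure.pi (fun p => gaussianReal 0 (vv n p)) := by
    rw [(iIndepFun_iff_map_fun_eq_pi_map (fun p => (hmA p).aemeasurable)).1 hind]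
    congr 1
    ext1 p
    obtain ⟨⟨i, j⟩, hij⟩ := p
    rcases eq_or_lt_of_le hij with h | h
    · simp only at h
      subst h
      simpa [vv] using hdiag i
    · simp only at h
      simpa [vv, h.ne] using hoff i j h
  apply Measure.ext_of_charFun
  ext t
  rw [GS_charFun (CC_psd n)]
  set c : EuclideanSpace ℝ (PP n) := WithLp.toLp 2 (fun p => ∑ b, t b * ww n p b) with hc
  have e1 : charFun (μ.map (fun ω => (WithLp.toLp 2 (fun b : Fin n → Bool =>
      (1/2) * ∑ i, ∑ j, signVec b i * A ω i j * signVec b j) : EuclideanSpace ℝ (Fin n → Bool)))) t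
      = charFun ((Measure.pi (fun p => gaussianReal 0 (vv n p))).map (WithLp.toLp 2)) c := by
    rw [← hlaw, Measure.map_map (by fun_prop) (measurable_pi_lambda _ hmA), charFun_apply, charFun_apply,
      integral_map hmX.aemeasurable (by fun_prop),
      integral_map ((WithLp.measurable_toLp 2 _).comp (measurable_pi_lambda _ hmA)).aemeasurable (by fun_prop)]
    refine integral_congr_ae (Eventually.of_forall fun ω => ?_)
    simp only
    congr 3
    simp only [PiLp.inner_apply, RCLike.inner_apply, conj_trivial, hX, hc, Function.comp, Finset.sum_mul,
      Finset.mul_sum]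
    rw [Finset.sum_comm]
    exact Finset.sum_congr rfl fun _ _ => Finset.sum_congr rfl fun _ _ => by ring
  rw [e1, charFun_pi]
  simp only [charFun_gaussianReal, ← Complex.exp_sum]
  congr 1
  have e2 : ∑ b, ∑ b', t b * CC n b b' * t b' = ∑ p, (vv n p : ℝ) * c p ^ 2 := by
    symm
    simp only [hc, sq, Finset.sum_mul_sum]
    simp only [Finset.mul_sum]
    rw [Finset.sum_comm]
    refine Finset.sum_congr rfl fun b _ => ?_
    rw [Finset.sum_comm]
    refine Finset.sum_congr rfl fun b' _ => ?_
    rw [CC_eq, Finset.mul_sum, Finset.sum_mul]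
    exact Finset.sum_congr rfl fun p _ => by ring
  rw [e2]
  push_cast
  rw [neg_div, Finset.sum_div, ← Finset.sum_neg_distrib]
  refine Finset.sum_congr rfl fun p _ => ?_
  simp

end law
/-- **Existence of the thermodynamic limit for the SK model** (Guerra–Toninelli).
With `H_n(σ) = ½⟨σ, A_n σ⟩` for `A_n ~ GOE(n)`, for every `β > 0` the limit
`lim_n (1/n) E[log Σ_σ exp(β H_n(σ))]` exists and is finite, and consequently
`lim_n (1/n) E[max_σ H_n(σ)]` exists and is finite. -/
theorem sk_free_energy_limit_exists {Ω : Type*} [MeasurableSpace Ω] (μ : Measure Ω)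
    [IsProbabilityMeasure μ]
    (A : (n : ℕ) → Ω → Fin n → Fin n → ℝ)
    (hGOE : ∀ n, 1 ≤ n → IsGOE μ n (A n)) :
    (∀ β : ℝ, 0 < β → ∃ L : ℝ, Tendsto
      (fun n : ℕ => (1 / (n : ℝ)) * ∫ ω, Real.log (∑ b : Fin n → Bool,
        Real.exp (β * ((1/2) * ∑ i, ∑ j, signVec b i * A n ω i j * signVec b j))) ∂μ)
      atTop (nhds L)) ∧
    (∃ M : ℝ, Tendsto
      (fun n : ℕ => (1 / (n : ℝ)) * ∫ ω,
        (⨆ b : Fin n → Bool, (1/2) * ∑ i, ∑ j, signVec b i * A n ω i j * signVec b j) ∂μ)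
      atTop (nhds M)) := by
  have hF : ∀ β : ℝ, ∀ n : ℕ, 1 ≤ n → FF n β = ∫ ω, Real.log (∑ b : Fin n → Bool,
        Real.exp (β * ((1/2) * ∑ i, ∑ j, signVec b i * A n ω i j * signVec b j))) ∂μ := by
    intro β n hn
    obtain ⟨hm, hl⟩ := goe_law μ n (A n) (hGOE n hn)
    have hc : Continuous (fun x : EuclideanSpace ℝ (Fin n → Bool) => lse (β • x).ofLp) :=
      lse_cont'.comp (by fun_prop)
    rw [FF, ← hl, integral_map hm.aemeasurable hc.aestronglyMeasurable]
    rfl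
  have hG : ∀ n : ℕ, 1 ≤ n → GG n = ∫ ω,
        (⨆ b : Fin n → Bool, (1/2) * ∑ i, ∑ j, signVec b i * A n ω i j * signVec b j) ∂μ := by
    intro n hn
    obtain ⟨hm, hl⟩ := goe_law μ n (A n) (hGOE n hn)
    rw [GG, ← hl, integral_map hm.aemeasurable (sup_meas n).aestronglyMeasurable]
  constructor
  · intro β _
    obtain ⟨L, hL⟩ := fekete (fun m n => FF_super m n β) _ (fun n => FF_le n β)
    refine ⟨L, hL.congr' ?_⟩
    filter_upwards [eventually_ge_atTop 1] with n hn
    rw [hF β n hn]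
  · obtain ⟨L, hL⟩ := fekete GG_super (Real.log 2 + 1 ^ 2 / 4) (fun n => by
      have h1 := (FF_GG n 1 one_pos).1
      rw [div_one] at h1
      exact h1.trans (FF_le n 1))
    refine ⟨L, hL.congr' ?_⟩
    filter_upwards [eventually_ge_atTop 1] with n hn
    rw [hG n hn]

end
end

section
/- There exists an absolute constant C > 0 such that for every n ≥ 2 and every symmetric matrix A ∈ ℝ^{n×n} with zero diagonal, max_{C' ∈ ℰ_n} ⟨A, C'⟩ ≤ C (log n) · max_{σ ∈ {−1,1}^n} ⟨σ, Aσ⟩, where both sides are non-negative. -/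
noncomputable section

/-- The elliptope `ℰ_n`: symmetric positive semidefinite matrices with unit diagonal. -/
def elliptope (n : ℕ) : Set (Matrix (Fin n) (Fin n) ℝ) :=
  {C | C.PosSemidef ∧ ∀ i, C i i = 1}

lemma aux_moment {n : ℕ} (y : Fin n → ℝ) (i j : Fin n) :
    ∑ b : Fin n → Bool, (∏ k, (1 + signVec b k * y k) / 2) * (signVec b i * signVec b j)
      = if i = j then 1 else y i * y j := by
  let e : Bool → ℝ := fun c => if c then 1 else -1
  have hw : ∀ f : Fin n → Bool → ℝ, ∑ b : Fin n → Bool, ∏ k, f k (b k) = ∏ k, ∑ c, f k c := by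
    intro f
    rw [Finset.prod_univ_sum, Fintype.piFinset_univ]
  by_cases hij : i = j
  · subst hij
    rw [if_pos rfl]
    have h1 : ∀ b : Fin n → Bool, signVec b i * signVec b i = 1 := by
      intro b
      unfold signVec
      split_ifs <;> norm_num
    simp only [h1, mul_one]
    have := hw (fun k c => (1 + e c * y k) / 2)
    refine this.trans ?_
    apply Finset.prod_eq_one
    intro k _
    simp [e]
    ring
  · rw [if_neg hij]
    have := hw (fun k c => (1 + e c * y k) / 2 * ((if k = i then e c else 1) * (if k = j then e c else 1)))
    have h2 : ∀ b : Fin n → Bool, ∏ k, ((1 + e (b k) * y k) / 2 * ((if k = i then e (b k) else 1) * (if k = j then e (b k) else 1)))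
        = (∏ k, (1 + signVec b k * y k) / 2) * (signVec b i * signVec b j) := by
      intro b
      rw [Finset.prod_mul_distrib, Finset.prod_mul_distrib, Finset.prod_ite_eq', Finset.prod_ite_eq']
      simp [e, signVec]
    simp only [h2] at this
    rw [this]
    have h3 : ∀ k, ∑ c, ((1 + e c * y k) / 2 * ((if k = i then e c else 1) * (if k = j then e c else 1)))
        = (if k = i then y k else 1) * (if k = j then y k else 1) := by
      intro k
      by_cases h : k = i
      · have h' : k ≠ j := fun hk => hij (h.symm.trans hk)
        simp [h, e, hij]
        ring
      · by_cases h' : k = j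
        · have : ¬ j = i := fun hk => hij hk.symm
          simp [h', e, this]
          ring
        · simp [h, h', e]
          ring
    simp only [h3]
    rw [Finset.prod_mul_distrib, Finset.prod_ite_eq', Finset.prod_ite_eq']
    simp

lemma aux_total {n : ℕ} (hn : 2 ≤ n) (y : Fin n → ℝ) :
    ∑ b : Fin n → Bool, (∏ k, (1 + signVec b k * y k) / 2) = 1 := by
  have := aux_moment y ⟨0, by omega⟩ ⟨0, by omega⟩
  rw [if_pos rfl] at this
  refine Eq.trans ?_ this
  apply Finset.sum_congr rfl
  intro b _
  have h1 : ∀ i, signVec b i * signVec b i = 1 := by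
    intro i
    unfold signVec
    split_ifs <;> norm_num
  rw [h1, mul_one]

lemma aux_swap {n : ℕ} (f : Fin n → Fin n → (Fin n → Bool) → ℝ) :
    ∑ i, ∑ j, ∑ b, f i j b = ∑ b, ∑ i, ∑ j, f i j b := by
  rw [Finset.sum_comm (s := (Finset.univ : Finset (Fin n → Bool)))]
  apply Finset.sum_congr rfl
  intro i _
  rw [Finset.sum_comm]

lemma aux_cube {n : ℕ} (hn : 2 ≤ n) (A : Matrix (Fin n) (Fin n) ℝ) (hd : ∀ i, A i i = 0) (M : ℝ)
    (hM : ∀ b : Fin n → Bool, ∑ i, ∑ j, signVec b i * A i j * signVec b j ≤ M)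
    (y : Fin n → ℝ) (hy : ∀ i, |y i| ≤ 1) : ∑ i, ∑ j, y i * A i j * y j ≤ M := by
  have h1 : ∑ i, ∑ j, y i * A i j * y j = ∑ b : Fin n → Bool, (∏ k, (1 + signVec b k * y k) / 2) *
      ∑ i, ∑ j, signVec b i * A i j * signVec b j := by
    have h2 : ∀ i j, y i * A i j * y j = ∑ b : Fin n → Bool,
        (∏ k, (1 + signVec b k * y k) / 2) * (signVec b i * A i j * signVec b j) := by
      intro i j
      have h3 := aux_moment y i j
      have h4 : ∑ b : Fin n → Bool,
          (∏ k, (1 + signVec b k * y k) / 2) * (signVec b i * A i j * signVec b j)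
          = A i j * ∑ b : Fin n → Bool,
            (∏ k, (1 + signVec b k * y k) / 2) * (signVec b i * signVec b j) := by
        rw [Finset.mul_sum]
        apply Finset.sum_congr rfl
        intro b _
        ring
      rw [h4, h3]
      split_ifs with h
      · subst h
        simp [hd]
      · ring
    simp only [h2]
    rw [aux_swap]
    simp only [Finset.mul_sum]
  rw [h1]
  have hw : ∀ b : Fin n → Bool, 0 ≤ ∏ k, (1 + signVec b k * y k) / 2 := by
    intro b
    apply Finset.prod_nonneg
    intro k _
    have := abs_le.1 (hy k)
    unfold signVec
    split_ifs <;> linarith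
  calc _ ≤ ∑ b : Fin n → Bool, (∏ k, (1 + signVec b k * y k) / 2) * M :=
        Finset.sum_le_sum fun b _ => mul_le_mul_of_nonneg_left (hM b) (hw b)
    _ = M := by rw [← Finset.sum_mul, aux_total hn, one_mul]

lemma aux_entry {n : ℕ} (hn : 2 ≤ n) (A : Matrix (Fin n) (Fin n) ℝ) (hs : A.IsSymm)
    (hd : ∀ i, A i i = 0) (M : ℝ) (hM0 : 0 ≤ M)
    (hM : ∀ b : Fin n → Bool, ∑ i, ∑ j, signVec b i * A i j * signVec b j ≤ M)
    (i j : Fin n) : 2 * |A i j| ≤ M := by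
  by_cases hij : i = j
  · subst hij
    simpa [hd] using hM0
  have key : ∀ s : ℝ, |s| ≤ 1 → 2 * (s * A i j) ≤ M := by
    intro s hsa
    have := aux_cube hn A hd M hM (fun k => (if k = i then 1 else 0) + (if k = j then s else 0)) (by
      intro k
      by_cases h : k = i
      · simp [h, hij]
      · by_cases h' : k = j
        · rw [if_neg h, if_pos h', zero_add]
          exact hsa
        · simp [h, h'])
    have hsym : A j i = A i j := hs.apply i j
    simp [add_mul, mul_add, Finset.sum_add_distrib, hd, hsym] at this
    linarith
  rcases abs_cases (A i j) with h | h
  · rw [h.1]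
    simpa using key 1 (by simp)
  · rw [h.1]
    simpa using key (-1) (by simp)

lemma aux_clip (T x : ℝ) (hT : 0 < T) :
    (x - max (-T) (min T x)) ^ 2 ≤
      2 / T ^ 2 * Real.exp (-T ^ 2) * (Real.exp (T * x) + Real.exp (-(T * x))) := by
  have key : ∀ u : ℝ, 0 ≤ u → u ^ 2 ≤ 2 / T ^ 2 * Real.exp (T * u) := by
    intro u hu
    have := Real.quadratic_le_exp_of_nonneg (mul_nonneg hT.le hu)
    rw [div_mul_eq_mul_div, le_div_iff₀ (by positivity)]
    have := mul_nonneg hT.le hu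
    nlinarith
  rcases lt_or_ge T x with h | h
  · rw [min_eq_left h.le, max_eq_right (by linarith)]
    refine (key (x - T) (by linarith)).trans ?_
    have : Real.exp (T * (x - T)) = Real.exp (-T ^ 2) * Real.exp (T * x) := by
      rw [← Real.exp_add]; congr 1; ring
    rw [this, mul_assoc]
    gcongr
    have := Real.exp_pos (-(T * x))
    linarith
  · rw [min_eq_right h]
    rcases lt_or_ge x (-T) with h' | h'
    · rw [max_eq_left h'.le]
      have e : (x - -T) ^ 2 = (-x - T) ^ 2 := by ring
      rw [e]
      refine (key (-x - T) (by linarith)).trans ?_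
      have : Real.exp (T * (-x - T)) = Real.exp (-T ^ 2) * Real.exp (-(T * x)) := by
        rw [← Real.exp_add]; congr 1; ring
      rw [this, mul_assoc]
      gcongr
      have := Real.exp_pos (T * x)
      linarith
    · rw [max_eq_right h', sub_self, zero_pow two_ne_zero]
      positivity

lemma aux_mgf {n : ℕ} (a : Fin n → ℝ) (ha : ∑ k, a k ^ 2 = 1) (t : ℝ) :
    ∑ b : Fin n → Bool, (1 / 2 : ℝ) ^ n * Real.exp (t * ∑ k, signVec b k * a k)
      ≤ Real.exp (t ^ 2 / 2) := by
  let e : Bool → ℝ := fun c => if c then 1 else -1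
  have hw : ∀ f : Fin n → Bool → ℝ, ∑ b : Fin n → Bool, ∏ k, f k (b k) = ∏ k, ∑ c, f k c := by
    intro f
    rw [Finset.prod_univ_sum, Fintype.piFinset_univ]
  have h1 : ∀ b : Fin n → Bool, (1 / 2 : ℝ) ^ n * Real.exp (t * ∑ k, signVec b k * a k)
      = ∏ k, (1 / 2 * Real.exp (t * (e (b k) * a k))) := by
    intro b
    rw [Finset.prod_mul_distrib, ← Real.exp_sum, ← Finset.mul_sum]
    simp [e, signVec]
  simp only [h1]
  rw [hw (fun k c => 1 / 2 * Real.exp (t * (e c * a k)))]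
  calc _ ≤ ∏ k, Real.exp ((t * a k) ^ 2 / 2) := by
        apply Finset.prod_le_prod
        · intro k _
          positivity
        · intro k _
          refine le_trans (le_of_eq ?_) (Real.cosh_le_exp_half_sq (t * a k))
          rw [Real.cosh_eq]
          simp [e]
          ring
    _ = Real.exp (t ^ 2 / 2) := by
        rw [← Real.exp_sum]
        congr 1
        simp only [mul_pow, mul_div_right_comm]
        rw [← Finset.mul_sum, ha, mul_one]

lemma aux_tail {n : ℕ} (hn : 2 ≤ n) (a : Fin n → ℝ) (ha : ∑ k, a k ^ 2 = 1) (T : ℝ) (hT : 0 < T)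
    (hT2 : T ^ 2 = 8 * Real.log n) :
    ∑ b : Fin n → Bool, (1 / 2 : ℝ) ^ n *
      ((∑ k, signVec b k * a k) - max (-T) (min T (∑ k, signVec b k * a k))) ^ 2
      ≤ 1 / (n : ℝ) ^ 4 := by
  have hn0 : (0 : ℝ) < n := by positivity
  have hlog : Real.log 2 ≤ Real.log n := Real.log_le_log (by norm_num) (by exact_mod_cast hn)
  have hl2 := Real.log_two_gt_d9
  have h1 := aux_mgf a ha T
  have h2 := aux_mgf a ha (-T)
  calc _ ≤ ∑ b : Fin n → Bool, (1 / 2 : ℝ) ^ n * (2 / T ^ 2 * Real.exp (-T ^ 2) *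
        (Real.exp (T * ∑ k, signVec b k * a k) + Real.exp (-(T * ∑ k, signVec b k * a k)))) := by
        apply Finset.sum_le_sum
        intro b _
        exact mul_le_mul_of_nonneg_left (aux_clip _ _ hT) (by positivity)
    _ = 2 / T ^ 2 * Real.exp (-T ^ 2) *
        (∑ b : Fin n → Bool, (1 / 2 : ℝ) ^ n * Real.exp (T * ∑ k, signVec b k * a k) +
         ∑ b : Fin n → Bool, (1 / 2 : ℝ) ^ n * Real.exp (-T * ∑ k, signVec b k * a k)) := by
        rw [← Finset.sum_add_distrib, Finset.mul_sum]
        apply Finset.sum_congr rfl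
        intro b _
        rw [neg_mul]
        ring
    _ ≤ 2 / T ^ 2 * Real.exp (-T ^ 2) * (Real.exp (T ^ 2 / 2) + Real.exp ((-T) ^ 2 / 2)) := by
        gcongr
    _ = 4 / T ^ 2 * Real.exp (-(T ^ 2 / 2)) := by
        have : Real.exp (-(T ^ 2 / 2)) = Real.exp (-T ^ 2) * Real.exp (T ^ 2 / 2) := by
          rw [← Real.exp_add]; congr 1; ring
        rw [this, neg_sq]
        ring
    _ ≤ 1 * Real.exp (-(T ^ 2 / 2)) := by
        gcongr
        rw [div_le_one (by positivity)]
        linarith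
    _ = 1 / (n : ℝ) ^ 4 := by
        rw [hT2, one_mul, Real.exp_neg, one_div]
        congr 1
        rw [show 8 * Real.log n / 2 = ((4 : ℕ) : ℝ) * Real.log n by push_cast; ring,
          Real.exp_nat_mul, Real.exp_log hn0]

lemma aux_second {n : ℕ} (a c : Fin n → ℝ) :
    ∑ b : Fin n → Bool, (1 / 2 : ℝ) ^ n * ((∑ k, signVec b k * a k) * (∑ k, signVec b k * c k))
      = ∑ k, a k * c k := by
  have hm : ∀ i j : Fin n, ∑ b : Fin n → Bool, (1 / 2 : ℝ) ^ n * (signVec b i * signVec b j)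
      = if i = j then 1 else 0 := by
    intro i j
    have := aux_moment (fun _ => (0 : ℝ)) i j
    simpa using this
  have h : ∀ b : Fin n → Bool, (1 / 2 : ℝ) ^ n * ((∑ k, signVec b k * a k) * (∑ k, signVec b k * c k))
      = ∑ i, ∑ j, (1 / 2 : ℝ) ^ n * (signVec b i * signVec b j) * (a i * c j) := by
    intro b
    rw [Finset.sum_mul_sum, Finset.mul_sum]
    apply Finset.sum_congr rfl
    intro i _
    rw [Finset.mul_sum]
    apply Finset.sum_congr rfl
    intro j _
    ring
  simp only [h]
  rw [Finset.sum_comm]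
  apply Finset.sum_congr rfl
  intro i _
  rw [Finset.sum_comm]
  simp only [← Finset.sum_mul, hm]
  simp

lemma aux_clip_abs (T x : ℝ) (hT : 0 < T) :
    |max (-T) (min T x)| ≤ T ∧ |max (-T) (min T x)| ≤ |x| := by
  constructor
  · rw [abs_le]
    exact ⟨le_max_left _ _, max_le (by linarith) (min_le_left _ _)⟩
  · rcases lt_or_ge T x with h | h
    · rw [min_eq_left h.le, max_eq_right (by linarith), abs_of_pos hT]
      exact h.le.trans (le_abs_self x)
    · rw [min_eq_right h]
      rcases lt_or_ge x (-T) with h' | h'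
      · rw [max_eq_left h'.le, abs_neg, abs_of_pos hT]
        have := neg_abs_le x
        linarith
      · rw [max_eq_right h']

lemma aux_pt (N x y u v : ℝ) (hN : 0 < N) (hu : |u| ≤ |x|) :
    |x * y - u * v| ≤ (N * (x - u) ^ 2 + y ^ 2 / N) / 2 + (N * (y - v) ^ 2 + x ^ 2 / N) / 2 := by
  have am : ∀ p q : ℝ, |p * q| ≤ (N * p ^ 2 + q ^ 2 / N) / 2 := by
    intro p q
    have h : N * p ^ 2 + q ^ 2 / N - 2 * (|p| * |q|) = (N * |p| - |q|) ^ 2 / N := by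
      rw [← sq_abs p, ← sq_abs q]
      field_simp
      ring
    have : 0 ≤ (N * |p| - |q|) ^ 2 / N := by positivity
    rw [abs_mul]
    linarith
  have e : x * y - u * v = (x - u) * y + (y - v) * u := by ring
  rw [e]
  refine (abs_add_le _ _).trans (add_le_add (am _ _) ((am _ _).trans ?_))
  have : u ^ 2 ≤ x ^ 2 := sq_le_sq.2 hu
  gcongr

open scoped MatrixOrder Matrix.Norms.L2Operator in
lemma aux_main {n : ℕ} (hn : 2 ≤ n) (A : Matrix (Fin n) (Fin n) ℝ) (hs : A.IsSymm)
    (hd : ∀ i, A i i = 0) (M : ℝ) (hM0 : 0 ≤ M)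
    (hM : ∀ b : Fin n → Bool, ∑ i, ∑ j, signVec b i * A i j * signVec b j ≤ M)
    (K : Matrix (Fin n) (Fin n) ℝ) (hK : K ∈ elliptope n) :
    Matrix.trace (A * K) ≤ 10 * Real.log n * M := by
  obtain ⟨hp, hdiag⟩ := hK
  obtain ⟨B, hB⟩ := CStarAlgebra.nonneg_iff_eq_star_mul_self.1 hp.nonneg
  have hKe : ∀ i j, K i j = ∑ k, B k i * B k j := by
    intro i j
    rw [hB]
    simp [Matrix.mul_apply]
  have hn0 : (0 : ℝ) < n := by positivity
  have hlog : Real.log 2 ≤ Real.log n := Real.log_le_log (by norm_num) (by exact_mod_cast hn)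
  have hl2 := Real.log_two_gt_d9
  obtain ⟨T, hT, hT2⟩ : ∃ T : ℝ, 0 < T ∧ T ^ 2 = 8 * Real.log n :=
    ⟨√(8 * Real.log n), Real.sqrt_pos.2 (by linarith), Real.sq_sqrt (by linarith)⟩
  let X : (Fin n → Bool) → Fin n → ℝ := fun b i => ∑ k, signVec b k * B k i
  let Y : (Fin n → Bool) → Fin n → ℝ := fun b i => max (-T) (min T (X b i))
  let w : ℝ := (1 / 2 : ℝ) ^ n
  have hw0 : 0 ≤ w := by positivity
  have hwt : ∑ b : Fin n → Bool, w = 1 := by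
    have := aux_total hn (fun _ => (0 : ℝ))
    simpa [w] using this
  have hunit : ∀ i, ∑ k, B k i ^ 2 = 1 := by
    intro i
    rw [← hdiag i, hKe]
    simp only [sq]
  have hXX : ∀ i j, ∑ b, w * (X b i * X b j) = K i j := by
    intro i j
    rw [hKe]
    exact aux_second _ _
  have hX2 : ∀ i, ∑ b, w * (X b i ^ 2) = 1 := by
    intro i
    rw [← hdiag i, ← hXX]
    simp only [sq]
  have hZ : ∀ i, ∑ b, w * (X b i - Y b i) ^ 2 ≤ 1 / (n : ℝ) ^ 4 := fun i =>
    aux_tail hn (fun k => B k i) (hunit i) T hT hT2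
  have hdiff : ∀ i j, |K i j - ∑ b, w * (Y b i * Y b j)| ≤ 2 / (n : ℝ) ^ 2 := by
    intro i j
    rw [← hXX, ← Finset.sum_sub_distrib]
    calc _ ≤ ∑ b, |w * (X b i * X b j) - w * (Y b i * Y b j)| := Finset.abs_sum_le_sum_abs _ _
      _ ≤ ∑ b, w * (((n : ℝ) ^ 2 * (X b i - Y b i) ^ 2 + X b j ^ 2 / (n : ℝ) ^ 2) / 2 +
            ((n : ℝ) ^ 2 * (X b j - Y b j) ^ 2 + X b i ^ 2 / (n : ℝ) ^ 2) / 2) := by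
          apply Finset.sum_le_sum
          intro b _
          rw [← mul_sub, abs_mul, abs_of_nonneg hw0]
          exact mul_le_mul_of_nonneg_left
            (aux_pt _ _ _ _ _ (by positivity) (aux_clip_abs T _ hT).2) hw0
      _ = ((n : ℝ) ^ 2 * ∑ b, w * (X b i - Y b i) ^ 2 + (∑ b, w * (X b j ^ 2)) / (n : ℝ) ^ 2) / 2 +
          ((n : ℝ) ^ 2 * ∑ b, w * (X b j - Y b j) ^ 2 + (∑ b, w * (X b i ^ 2)) / (n : ℝ) ^ 2) / 2 := by
          simp only [Finset.mul_sum, Finset.sum_div, ← Finset.sum_add_distrib]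
          apply Finset.sum_congr rfl
          intro b _
          ring
      _ ≤ ((n : ℝ) ^ 2 * (1 / (n : ℝ) ^ 4) + 1 / (n : ℝ) ^ 2) / 2 +
          ((n : ℝ) ^ 2 * (1 / (n : ℝ) ^ 4) + 1 / (n : ℝ) ^ 2) / 2 := by
          rw [hX2, hX2]
          have := hZ i
          have := hZ j
          gcongr
      _ = 2 / (n : ℝ) ^ 2 := by
          field_simp
          ring
  have hYb : ∀ b, ∑ i, ∑ j, Y b i * A i j * Y b j ≤ T ^ 2 * M := by
    intro b
    have := aux_cube hn A hd M hM (fun i => Y b i / T) (by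
      intro i
      rw [abs_div, abs_of_pos hT, div_le_one hT]
      exact (aux_clip_abs T _ hT).1)
    have e : ∑ i, ∑ j, Y b i * A i j * Y b j
        = T ^ 2 * ∑ i, ∑ j, Y b i / T * A i j * (Y b j / T) := by
      simp only [Finset.mul_sum]
      apply Finset.sum_congr rfl
      intro i _
      apply Finset.sum_congr rfl
      intro j _
      field_simp
    rw [e]
    gcongr
  have hYE : ∑ i, ∑ j, A i j * ∑ b, w * (Y b i * Y b j) ≤ T ^ 2 * M := by
    have e : ∑ i, ∑ j, A i j * ∑ b, w * (Y b i * Y b j)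
        = ∑ b, w * ∑ i, ∑ j, Y b i * A i j * Y b j := by
      simp only [Finset.mul_sum]
      rw [aux_swap]
      apply Finset.sum_congr rfl
      intro b _
      apply Finset.sum_congr rfl
      intro i _
      apply Finset.sum_congr rfl
      intro j _
      ring
    rw [e]
    calc _ ≤ ∑ b : Fin n → Bool, w * (T ^ 2 * M) :=
          Finset.sum_le_sum fun b _ => mul_le_mul_of_nonneg_left (hYb b) hw0
      _ = T ^ 2 * M := by rw [← Finset.sum_mul, hwt, one_mul]
  have htr : Matrix.trace (A * K) = ∑ i, ∑ j, A i j * K i j := by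
    have hsym : ∀ i j, K j i = K i j := by
      intro i j
      rw [hKe, hKe]
      simp only [mul_comm]
    simp only [Matrix.trace, Matrix.diag, Matrix.mul_apply]
    exact Finset.sum_congr rfl fun i _ => Finset.sum_congr rfl fun j _ => by rw [hsym]
  have hrem : ∑ i, ∑ j, A i j * (K i j - ∑ b, w * (Y b i * Y b j)) ≤ M := by
    calc _ ≤ ∑ i : Fin n, ∑ j : Fin n, (M / 2) * (2 / (n : ℝ) ^ 2) := by
          apply Finset.sum_le_sum
          intro i _
          apply Finset.sum_le_sum
          intro j _
          refine (le_abs_self _).trans ?_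
          rw [abs_mul]
          have := aux_entry hn A hs hd M hM0 hM i j
          have := hdiff i j
          gcongr
          linarith
      _ = M := by
          simp
          field_simp
  have hsplit : Matrix.trace (A * K) = ∑ i, ∑ j, A i j * (K i j - ∑ b, w * (Y b i * Y b j)) +
      ∑ i, ∑ j, A i j * ∑ b, w * (Y b i * Y b j) := by
    rw [htr]
    simp only [← Finset.sum_add_distrib]
    apply Finset.sum_congr rfl
    intro i _
    apply Finset.sum_congr rfl
    intro j _
    ring
  rw [hT2] at hYE
  rw [hsplit]
  nlinarith

/-- **Grothendieck-type inequality for the elliptope relaxation.** There is an absolute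
constant `C > 0` such that for every `n ≥ 2` and every symmetric `A ∈ ℝ^{n×n}` with zero
diagonal, `max_{C' ∈ ℰ_n} ⟨A, C'⟩ ≤ C (log n) max_{σ ∈ {−1,1}^n} ⟨σ, Aσ⟩`, both sides being
non-negative. -/
theorem grothendieck_log_n_approximation :
    ∃ C : ℝ, 0 < C ∧ ∀ n : ℕ, 2 ≤ n → ∀ A : Matrix (Fin n) (Fin n) ℝ,
      A.IsSymm → (∀ i, A i i = 0) →
      (0 ≤ ⨆ b : Fin n → Bool, ∑ i, ∑ j, signVec b i * A i j * signVec b j) ∧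
      (0 ≤ sSup ((fun C' => Matrix.trace (A * C')) '' elliptope n)) ∧
      sSup ((fun C' => Matrix.trace (A * C')) '' elliptope n)
        ≤ C * Real.log n *
          ⨆ b : Fin n → Bool, ∑ i, ∑ j, signVec b i * A i j * signVec b j := by
  refine ⟨10, by norm_num, ?_⟩
  intro n hn A hs hd
  have hM : ∀ b : Fin n → Bool, ∑ i, ∑ j, signVec b i * A i j * signVec b j ≤
      ⨆ b : Fin n → Bool, ∑ i, ∑ j, signVec b i * A i j * signVec b j := fun b =>
    le_ciSup (f := fun b : Fin n → Bool => ∑ i, ∑ j, signVec b i * A i j * signVec b j)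
      (Set.finite_range _).bddAbove b
  have hM0 : 0 ≤ ⨆ b : Fin n → Bool, ∑ i, ∑ j, signVec b i * A i j * signVec b j := by
    have := aux_cube hn A hd _ hM (fun _ => 0) (by simp)
    simpa using this
  have hone : (1 : Matrix (Fin n) (Fin n) ℝ) ∈ elliptope n :=
    ⟨Matrix.PosSemidef.one, by simp⟩
  have hub := aux_main hn A hs hd _ hM0 hM
  refine ⟨hM0, ?_, ?_⟩
  · refine le_csSup ⟨10 * Real.log n *
      ⨆ b : Fin n → Bool, ∑ i, ∑ j, signVec b i * A i j * signVec b j, ?_⟩ ⟨1, hone, ?_⟩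
    · rintro _ ⟨K, hK, rfl⟩
      exact hub K hK
    · simp [Matrix.trace, hd]
  · apply csSup_le (Set.Nonempty.image _ ⟨1, hone⟩)
    rintro _ ⟨K, hK, rfl⟩
    exact hub K hK

end
end
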